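/- Let G be a concurrent game structure with boolean reward function and U⊆S a set of states such that for every ε>0 there exists a stationary strategy σ₁^ε for player 1 with Pr_s^{σ₁^ε,σ₂}(LimInfAvg(1−ε) ∩ Safe(U)) = 1 for every strategy σ₂ of player 2 and every s∈U. Then there exists a Markov strategy σ₁* for player 1 such that for every strategy σ₂ of player 2 and every s∈U, Pr_s^{σ₁*,σ₂}(LimInfAvg(1)) = 1. -/

import Mathlib

/-!
The cost of a move is one minus its reward; the aim is a Markov strategy under which the
long-run average cost is almost surely zero.

*The measure.* `CGS.pr` is an outer measure generated by cylinder probabilities. All sets of the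
product σ-algebra are Carathéodory measurable for it, and compactness of the space of plays shows
that its total mass is one, so it restricts to a probability measure `CGS.mu` giving each cylinder
its prescribed probability. The events `LimInfAvg` and `Safe` are measurable, and the usual tools
(dominated convergence, Markov's inequality, Borel–Cantelli) apply.

*Potentials.* Fix a stationary strategy keeping the average cost at most `ε` almost surely from all
states of `U`. There is a function `φ` on states such that, from every state of `U` and against
every action of player 2, the expected cost of one round plus the expected value of `φ` at the next
state is at most `2 * ε` plus the current value of `φ` (`CGS.exists_potential`). If there were none,
linear-programming duality (`CGS.farkas`) would produce a nonzero nonnegative weight on pairs of a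
state of `U` and an action of player 2, invariant under the dynamics and of average cost at least
`2 * ε`. Playing its conditional laws is a stationary strategy of player 2 whose expected average
cost stays at least `2 * ε`, for a suitable start state and arbitrarily long horizons, against
dominated convergence. Almost sure safety means moreover that no move used in `U` leaves `U`
(`CGS.closed_of_safe`).

*Switching slowly.* The Markov strategy runs through the stationary strategies for
`ε = 1 / (k + 1)`, passing to the next one only when all potentials met so far are small compared
with the fourth root of the elapsed time (`CGS.exists_schedule`). The potentials are shifted by
constants so as to decrease at each switch. Then cumulated cost minus `∑ 2 * ε` plus the current
potential is a supermartingale with slowly growing increments. Its exponential moments are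
controlled (`CGS.Schedule.Ex_exp_le`), so the probability that it exceeds `δ * n` at time `n` is at
most `exp (-(δ ^ 2 / 4) * √n)` (`CGS.Schedule.tail`), which is summable. By Borel–Cantelli the
average cost is eventually at most `δ` plus the Cesàro mean of the allowances `2 * ε` plus a
vanishing term, and the Cesàro mean tends to zero.
-/

open scoped Classical ENNReal
open Filter

/-- A concurrent stochastic game structure `G = (S, A, Γ₁, Γ₂, δ)` together with a
boolean reward function `r : S × A × A → {0,1}`. -/
structure CGS where
  /-- finite state space -/
  S : Type
  /-- finite action space -/
  A : Type
  [fintypeS : Fintype S]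
  [fintypeA : Fintype A]
  [decS : DecidableEq S]
  [decA : DecidableEq A]
  [nonemptyS : Nonempty S]
  /-- moves available to player 1 -/
  moves1 : S → Finset A
  /-- moves available to player 2 -/
  moves2 : S → Finset A
  moves1_nonempty : ∀ s, (moves1 s).Nonempty
  moves2_nonempty : ∀ s, (moves2 s).Nonempty
  /-- probabilistic transition function -/
  trans : S → A → A → PMF S
  /-- reward function -/
  reward : S → A → A → ℝ
  /-- the reward function is boolean -/
  reward_bool : ∀ s a b, reward s a b = 0 ∨ reward s a b = 1

attribute [instance] CGS.fintypeS CGS.fintypeA CGS.decS CGS.decA CGS.nonemptyS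

namespace CGS

variable (G : CGS)

/-- One round: a state together with the actions chosen by the two players. -/
abbrev Move := G.S × G.A × G.A

/-- A finite history. -/
abbrev Hist := List G.Move

/-- A play (we allow arbitrary infinite sequences; invalid ones get probability 0). -/
abbrev Play := ℕ → G.Move

/-- A (behavioral) strategy whose moves are restricted to `moves`. -/
structure Strategy (moves : G.S → Finset G.A) where
  play : G.Hist → G.S → PMF G.A
  play_mem : ∀ h s a, play h s a ≠ 0 → a ∈ moves s

/-- A strategy for player 1. -/
abbrev Strategy1 := G.Strategy G.moves1
/-- A strategy for player 2. -/
abbrev Strategy2 := G.Strategy G.moves2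

variable {G}

/-- A stationary (memoryless) strategy. -/
def Strategy.Stationary {mv : G.S → Finset G.A} (σ : G.Strategy mv) : Prop :=
  ∀ h h' s, σ.play h s = σ.play h' s

/-- A Markov strategy: depends only on the length of the history and current state. -/
def Strategy.Markov {mv : G.S → Finset G.A} (σ : G.Strategy mv) : Prop :=
  ∀ h h' s, h.length = h'.length → σ.play h s = σ.play h' s

/-- The patience of a strategy: the inverse of the minimum nonzero probability
assigned to an action. -/
noncomputable def Strategy.patience {mv : G.S → Finset G.A} (σ : G.Strategy mv) : ℝ≥0∞ :=
  ⨆ h, ⨆ s, ⨆ a, if σ.play h s a = 0 then 0 else (σ.play h s a)⁻¹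

/-- Probability that the play follows exactly the finite prefix `w`, starting at
state `s` after past history `h`, when the players use `σ1` and `σ2`. -/
noncomputable def prefProb (σ1 : G.Strategy1) (σ2 : G.Strategy2) :
    G.Hist → G.S → List G.Move → ℝ≥0∞
  | _, _, [] => 1
  | h, s, (t, a, b) :: w =>
      if t = s then
        σ1.play h s a * σ2.play h s b *
          (match w with
            | [] => 1
            | (t', _, _) :: _ =>
                G.trans s a b t' * prefProb σ1 σ2 (h ++ [(s, a, b)]) t' w)
      else 0

/-- The cylinder of plays extending a given finite prefix. -/
def cyl (n : ℕ) (w : Fin n → G.Move) : Set G.Play := {ρ | ∀ i : Fin n, ρ i.1 = w i}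

/-- Pre-measure of a set of plays: the infimum, over resolutions `n`, of the total
probability of the length-`n` prefixes meeting the set. -/
noncomputable def preMeas (σ1 : G.Strategy1) (σ2 : G.Strategy2) (s : G.S)
    (U : Set G.Play) : ℝ≥0∞ :=
  ⨅ n : ℕ, ∑ w : Fin n → G.Move,
    if (cyl n w ∩ U).Nonempty then prefProb σ1 σ2 [] s (List.ofFn w) else 0

lemma preMeas_empty (σ1 : G.Strategy1) (σ2 : G.Strategy2) (s : G.S) :
    preMeas σ1 σ2 s (∅ : Set G.Play) = 0 := by
  simp [preMeas]

/-- The probability distribution over plays from `s` under `σ1, σ2`, obtained by the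
Carathéodory construction from cylinder probabilities (this agrees with the
Ionescu–Tulcea measure on all measurable sets). -/
noncomputable def prOuter (σ1 : G.Strategy1) (σ2 : G.Strategy2) (s : G.S) :
    MeasureTheory.OuterMeasure G.Play :=
  MeasureTheory.OuterMeasure.ofFunction (preMeas σ1 σ2 s) (preMeas_empty σ1 σ2 s)

/-- `Pr_s^{σ1,σ2}(Φ)`. -/
noncomputable def pr (σ1 : G.Strategy1) (σ2 : G.Strategy2) (s : G.S)
    (Φ : Set G.Play) : ℝ≥0∞ :=
  prOuter σ1 σ2 s Φ

variable (G)

/-- Average reward over the first `n` rounds of a play. -/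
noncomputable def avg (ρ : G.Play) (n : ℕ) : ℝ :=
  (∑ i ∈ Finset.range n, G.reward (ρ i).1 (ρ i).2.1 (ρ i).2.2) / n

/-- `LimInfAvg` of a play. -/
noncomputable def limInfAvg (ρ : G.Play) : ℝ := Filter.atTop.liminf (G.avg ρ)

/-- `LimSupAvg` of a play. -/
noncomputable def limSupAvg (ρ : G.Play) : ℝ := Filter.atTop.limsup (G.avg ρ)

/-- The event `LimInfAvg(λ) = {ρ : LimInfAvg(ρ) ≥ λ}`. -/
def evLimInfAvgGe (lam : ℝ) : Set G.Play := {ρ | lam ≤ G.limInfAvg ρ}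
/-- The event `LimSupAvg(λ) = {ρ : LimSupAvg(ρ) ≥ λ}`. -/
def evLimSupAvgGe (lam : ℝ) : Set G.Play := {ρ | lam ≤ G.limSupAvg ρ}
/-- The event `{ρ : LimInfAvg(ρ) ≤ λ}`. -/
def evLimInfAvgLe (lam : ℝ) : Set G.Play := {ρ | G.limInfAvg ρ ≤ lam}
/-- The event `{ρ : LimSupAvg(ρ) ≤ λ}`. -/
def evLimSupAvgLe (lam : ℝ) : Set G.Play := {ρ | G.limSupAvg ρ ≤ lam}
/-- The event `{ρ : LimInfAvg(ρ) < λ}`. -/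
def evLimInfAvgLt (lam : ℝ) : Set G.Play := {ρ | G.limInfAvg ρ < lam}
/-- The event `{ρ : LimSupAvg(ρ) < λ}`. -/
def evLimSupAvgLt (lam : ℝ) : Set G.Play := {ρ | G.limSupAvg ρ < lam}

/-- The safety event: all states of the play lie in `F`. -/
def safe (F : Set G.S) : Set G.Play := {ρ | ∀ i, (ρ i).1 ∈ F}

/-- Almost-sure winning set for player 1. -/
def Almost1 (Φ : Set G.Play) : Set G.S :=
  {s | ∃ σ1 : G.Strategy1, ∀ σ2 : G.Strategy2, pr σ1 σ2 s Φ = 1}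
/-- Positive winning set for player 1. -/
def Positive1 (Φ : Set G.Play) : Set G.S :=
  {s | ∃ σ1 : G.Strategy1, ∀ σ2 : G.Strategy2, 0 < pr σ1 σ2 s Φ}
/-- Almost-sure winning set for player 2. -/
def Almost2 (Φ : Set G.Play) : Set G.S :=
  {s | ∃ σ2 : G.Strategy2, ∀ σ1 : G.Strategy1, pr σ1 σ2 s Φ = 1}
/-- Positive winning set for player 2. -/
def Positive2 (Φ : Set G.Play) : Set G.S :=
  {s | ∃ σ2 : G.Strategy2, ∀ σ1 : G.Strategy1, 0 < pr σ1 σ2 s Φ}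

/-- `n`, the number of states. -/
def nS : ℕ := Fintype.card G.S

/-- `m`, the maximal number of actions available to a player at a state. -/
def mA : ℕ := Finset.univ.sup fun s => max (G.moves1 s).card (G.moves2 s).card

/-- `δ_min`, the minimum nonzero transition probability. -/
noncomputable def deltaMin : ℝ :=
  sInf {x : ℝ | 0 < x ∧ ∃ s a b t, a ∈ G.moves1 s ∧ b ∈ G.moves2 s ∧
    ((G.trans s a b) t).toReal = x}

end CGS

/-! ### One-step extension of finite prefixes -/

namespace CGS

open MeasureTheory

variable {G : CGS}

/-- Law of the next state after the moves `l` of a play started in `s`. -/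
noncomputable def nxt (s : G.S) (l : List G.Move) : PMF G.S :=
  l.getLast?.elim (PMF.pure s) (fun m => G.trans m.1 m.2.1 m.2.2)

/-- Probability that the move `m` follows the prefix `l` of a play started in `s`. The strategies
see the history `h ++ l`, where `h` is whatever was played before the start. -/
noncomputable def kap (σ1 : G.Strategy1) (σ2 : G.Strategy2) (h : G.Hist) (s : G.S)
    (l : List G.Move) (m : G.Move) : ℝ≥0∞ :=
  nxt s l m.1 * (σ1.play (h ++ l) m.1 m.2.1 * σ2.play (h ++ l) m.1 m.2.2)

lemma nxt_append (s : G.S) (l : List G.Move) (m : G.Move) :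
    nxt s (l ++ [m]) = G.trans m.1 m.2.1 m.2.2 := by
  simp [nxt]

/-- The definition of `prefProb` unfolds a word from the front; this is the unfolding from
the back, by which martingale arguments proceed. -/
lemma prefProb_append (σ1 : G.Strategy1) (σ2 : G.Strategy2) (w : List G.Move) (m : G.Move) :
    ∀ (h : G.Hist) (s : G.S),
      prefProb σ1 σ2 h s (w ++ [m]) = prefProb σ1 σ2 h s w * kap σ1 σ2 h s w m := by
  obtain ⟨t, a, b⟩ := m
  induction w with
  | nil =>
    intro h s
    by_cases hts : t = s
    · subst hts; simp [prefProb, kap, nxt]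
    · simp [prefProb, kap, nxt, hts]
  | cons m0 w ih =>
    intro h s
    obtain ⟨t0, a0, b0⟩ := m0
    by_cases hts : t0 = s
    · subst hts
      cases w with
      | nil =>
        simp [prefProb, kap, nxt, mul_assoc]
      | cons m1 w =>
        obtain ⟨t1, a1, b1⟩ := m1
        have := ih (h ++ [(t0, a0, b0)]) t1
        simp only [List.cons_append] at this ⊢
        rw [prefProb, if_pos rfl, this]
        conv_rhs => rw [prefProb, if_pos rfl]
        simp only [kap, nxt, mul_assoc, List.getLast?_cons_cons, List.append_assoc,
          List.cons_append, List.nil_append]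
        simp only [List.getLast?_cons, Option.elim]
    · simp [prefProb, hts]

lemma pmf_sum {α : Type} [Fintype α] (p : PMF α) : ∑ a, p a = 1 := by
  rw [← p.tsum_coe, tsum_fintype]

lemma pmf_sum_toReal {α : Type} [Fintype α] (p : PMF α) : ∑ a, (p a).toReal = 1 := by
  rw [← ENNReal.toReal_sum (fun a _ => p.apply_ne_top a), pmf_sum, ENNReal.toReal_one]

lemma kap_sum (σ1 : G.Strategy1) (σ2 : G.Strategy2) (h : G.Hist) (s : G.S)
    (l : List G.Move) : ∑ m, kap σ1 σ2 h s l m = 1 := by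
  simp only [kap, Fintype.sum_prod_type, ← Finset.mul_sum, pmf_sum, mul_one]

lemma sum_snoc {M : Type*} [AddCommMonoid M] {n : ℕ} (f : (Fin (n + 1) → G.Move) → M) :
    ∑ w, f w = ∑ w : Fin n → G.Move, ∑ m : G.Move, f (Fin.snoc w m) := by
  rw [← (Fin.snocEquiv (fun _ => G.Move)).sum_comp, Fintype.sum_prod_type_right]
  rfl

lemma ofFn_snoc {n : ℕ} (w : Fin n → G.Move) (m : G.Move) :
    List.ofFn (Fin.snoc w m : Fin (n + 1) → G.Move) = List.ofFn w ++ [m] := by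
  rw [List.ofFn_succ']
  simp

/-! ### The probability measure behind `prOuter` -/

/-- Total probability of the prefixes of length `n` that meet `V`. -/
noncomputable def lvl (σ1 : G.Strategy1) (σ2 : G.Strategy2) (s : G.S) (n : ℕ)
    (V : Set G.Play) : ℝ≥0∞ :=
  ∑ w : Fin n → G.Move,
    if (cyl n w ∩ V).Nonempty then prefProb σ1 σ2 [] s (List.ofFn w) else 0

lemma preMeas_eq (σ1 : G.Strategy1) (σ2 : G.Strategy2) (s : G.S) (V : Set G.Play) :
    preMeas σ1 σ2 s V = ⨅ n, lvl σ1 σ2 s n V := rfl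

lemma cyl_snoc_subset {n : ℕ} (w : Fin n → G.Move) (m : G.Move) :
    cyl (n + 1) (Fin.snoc w m : Fin (n + 1) → G.Move) ⊆ cyl n w := by
  intro ρ hρ i
  have := hρ i.castSucc
  simpa using this

lemma lvl_succ_le (σ1 : G.Strategy1) (σ2 : G.Strategy2) (s : G.S) (n : ℕ)
    (V : Set G.Play) : lvl σ1 σ2 s (n + 1) V ≤ lvl σ1 σ2 s n V := by
  unfold lvl
  rw [sum_snoc]
  refine Finset.sum_le_sum fun w _ => ?_
  by_cases hw : (cyl n w ∩ V).Nonempty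
  · rw [if_pos hw]
    calc _ ≤ ∑ m : G.Move, prefProb σ1 σ2 [] s (List.ofFn w) *
            kap σ1 σ2 [] s (List.ofFn w) m := by
          refine Finset.sum_le_sum fun m _ => ?_
          rw [ofFn_snoc, prefProb_append]
          split_ifs <;> simp
      _ = _ := by rw [← Finset.mul_sum, kap_sum, mul_one]
  · rw [if_neg hw]
    refine le_of_eq (Finset.sum_eq_zero fun m _ => if_neg ?_)
    exact fun h => hw (h.mono (Set.inter_subset_inter_left _ (cyl_snoc_subset w m)))

lemma lvl_antitone (σ1 : G.Strategy1) (σ2 : G.Strategy2) (s : G.S) (V : Set G.Play) :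
    Antitone (fun n => lvl σ1 σ2 s n V) :=
  antitone_nat_of_succ_le fun n => lvl_succ_le σ1 σ2 s n V

lemma prefProb_sum (σ1 : G.Strategy1) (σ2 : G.Strategy2) (s : G.S) (n : ℕ) :
    ∑ w : Fin n → G.Move, prefProb σ1 σ2 [] s (List.ofFn w) = 1 := by
  induction n with
  | zero => simp [prefProb]
  | succ n ih =>
    rw [sum_snoc, ← ih]
    refine Finset.sum_congr rfl fun w _ => ?_
    simp_rw [ofFn_snoc, prefProb_append]
    rw [← Finset.mul_sum, kap_sum, mul_one]

/-- Every set of moves is measurable; plays carry the resulting product σ-algebra. -/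
instance moveMeasurableSpace (G : CGS) : MeasurableSpace G.Move := ⊤

instance moveDiscreteMeasurableSpace (G : CGS) : DiscreteMeasurableSpace G.Move :=
  ⟨fun _ => trivial⟩

lemma caratheodory_of_pfx (σ1 : G.Strategy1) (σ2 : G.Strategy2) (s : G.S) (k : ℕ)
    (C : Set G.Play)
    (hC : ∀ ρ ρ' : G.Play, (∀ i < k, ρ i = ρ' i) → ρ ∈ C → ρ' ∈ C) :
    MeasurableSet[(prOuter σ1 σ2 s).caratheodory] C := by
  refine OuterMeasure.ofFunction_caratheodory fun t => ?_
  rw [preMeas_eq σ1 σ2 s t]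
  refine le_iInf fun n => ?_
  refine le_trans ?_ (lvl_antitone σ1 σ2 s t (le_max_left n k))
  refine (add_le_add (iInf_le _ (max n k)) (iInf_le _ (max n k))).trans ?_
  unfold lvl
  rw [← Finset.sum_add_distrib]
  refine Finset.sum_le_sum fun w _ => ?_
  by_cases h1 : (cyl (max n k) w ∩ (t ∩ C)).Nonempty
  · have h2 : ¬ (cyl (max n k) w ∩ (t \ C)).Nonempty := by
      rintro ⟨ρ', hρ', ht', hc'⟩
      obtain ⟨ρ, hρ, ht, hc⟩ := h1
      refine hc' (hC ρ ρ' (fun i hi => ?_) hc)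
      have hi' : i < max n k := lt_of_lt_of_le hi (le_max_right _ _)
      rw [hρ ⟨i, hi'⟩, hρ' ⟨i, hi'⟩]
    rw [if_pos h1, if_neg h2, if_pos (h1.mono (by gcongr; exact Set.inter_subset_left)), add_zero]
  · rw [if_neg h1, zero_add]
    by_cases h2 : (cyl (max n k) w ∩ (t \ C)).Nonempty
    · rw [if_pos h2, if_pos (h2.mono (by gcongr; exact Set.sdiff_subset))]
    · rw [if_neg h2]; exact zero_le

lemma le_caratheodory (σ1 : G.Strategy1) (σ2 : G.Strategy2) (s : G.S) :
    (MeasurableSpace.pi : MeasurableSpace G.Play) ≤ (prOuter σ1 σ2 s).caratheodory := by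
  refine iSup_le fun i => ?_
  rintro _ ⟨B, -, rfl⟩
  refine caratheodory_of_pfx σ1 σ2 s (i + 1) _ fun ρ ρ' h hρ => ?_
  simpa [← h i (Nat.lt_succ_self i)] using hρ

/-- Countable additivity of the cylinder probabilities, by compactness of the space of plays. -/
lemma one_le_prOuter_univ (σ1 : G.Strategy1) (σ2 : G.Strategy2) (s : G.S) :
    1 ≤ prOuter σ1 σ2 s Set.univ := by
  unfold prOuter
  rw [OuterMeasure.ofFunction_apply]
  refine le_iInf fun t => le_iInf fun ht => ?_
  refine ENNReal.le_of_forall_pos_le_add fun ε hε _ => ?_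
  obtain ⟨ε', hε', hsum⟩ := ENNReal.exists_pos_sum_of_countable
    (ε := (ε : ℝ≥0∞)) (by exact_mod_cast hε.ne') ℕ
  have hex : ∀ i, ∃ n, lvl σ1 σ2 s n (t i) ≤ preMeas σ1 σ2 s (t i) + ε' i := by
    intro i
    rw [preMeas_eq]
    by_cases hfin : (⨅ n, lvl σ1 σ2 s n (t i)) = ⊤
    · exact ⟨0, by rw [hfin]; simp⟩
    · obtain ⟨n, hn⟩ := exists_lt_of_ciInf_lt (ENNReal.lt_add_right hfin
        (by exact_mod_cast (hε' i).ne' : (ε' i : ℝ≥0∞) ≠ 0))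
      exact ⟨n, hn.le⟩
  choose N hN using hex
  let _ : TopologicalSpace G.Move := ⊥
  have : DiscreteTopology G.Move := ⟨rfl⟩
  -- The hull of `t i` consists of the plays sharing their first `N i` moves with some play in `t i`.
  let V : ℕ → Set G.Play := fun i => {ρ | (cyl (N i) (fun j : Fin (N i) => ρ j) ∩ t i).Nonempty}
  have hVo : ∀ i, IsOpen (V i) := by
    intro i
    have hc : Continuous (fun ρ : G.Play => (fun j : Fin (N i) => ρ j)) := by fun_prop
    exact (isOpen_discrete {w : Fin (N i) → G.Move | (cyl (N i) w ∩ t i).Nonempty}).preimage hc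
  have hVc : (Set.univ : Set G.Play) ⊆ ⋃ i, V i := by
    intro ρ _
    obtain ⟨i, hi⟩ := Set.mem_iUnion.1 (ht (Set.mem_univ ρ))
    exact Set.mem_iUnion.2 ⟨i, ρ, fun j => rfl, hi⟩
  obtain ⟨F, hF⟩ := isCompact_univ.elim_finite_subcover V hVo hVc
  let M := F.sup N
  have h1 : (1 : ℝ≥0∞) ≤ ∑ i ∈ F, lvl σ1 σ2 s M (V i) := by
    unfold lvl
    rw [Finset.sum_comm, ← prefProb_sum σ1 σ2 s M]
    refine Finset.sum_le_sum fun w _ => ?_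
    let ρ : G.Play := fun j => if hj : j < M then w ⟨j, hj⟩ else Classical.choice
      ⟨(Classical.choice G.nonemptyS, (G.moves1_nonempty (Classical.choice G.nonemptyS)).choose,
        (G.moves1_nonempty (Classical.choice G.nonemptyS)).choose)⟩
    obtain ⟨i, hi⟩ := Set.mem_iUnion.1 (hF (Set.mem_univ ρ))
    obtain ⟨hiF, hi⟩ := Set.mem_iUnion.1 hi
    refine le_trans ?_ (Finset.single_le_sum (fun _ _ => zero_le) hiF)
    rw [if_pos ⟨ρ, fun j => by simp [ρ], hi⟩]
  have h2 : ∀ i ∈ F, lvl σ1 σ2 s M (V i) ≤ lvl σ1 σ2 s (N i) (t i) := by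
    intro i hi
    refine (lvl_antitone σ1 σ2 s (V i) (Finset.le_sup hi : N i ≤ M)).trans ?_
    unfold lvl
    refine Finset.sum_le_sum fun w _ => ?_
    by_cases hw : (cyl (N i) w ∩ V i).Nonempty
    · rw [if_pos hw, if_pos]
      obtain ⟨ρ, hρ, ρ', hρ', ht'⟩ := hw
      exact ⟨ρ', fun j => (hρ' j).trans (hρ j), ht'⟩
    · rw [if_neg hw]; exact zero_le
  calc (1 : ℝ≥0∞) ≤ ∑ i ∈ F, lvl σ1 σ2 s M (V i) := h1
    _ ≤ ∑ i ∈ F, (preMeas σ1 σ2 s (t i) + ε' i) :=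
        Finset.sum_le_sum fun i hi => (h2 i hi).trans (hN i)
    _ ≤ ∑' i, (preMeas σ1 σ2 s (t i) + ε' i) := ENNReal.sum_le_tsum F
    _ = ∑' i, preMeas σ1 σ2 s (t i) + ∑' i, (ε' i : ℝ≥0∞) := ENNReal.tsum_add
    _ ≤ _ := by gcongr

/-- The restriction of `prOuter` to the product σ-algebra. -/
noncomputable def mu (σ1 : G.Strategy1) (σ2 : G.Strategy2) (s : G.S) : Measure G.Play :=
  (prOuter σ1 σ2 s).toMeasure (le_caratheodory σ1 σ2 s)

lemma mu_apply (σ1 : G.Strategy1) (σ2 : G.Strategy2) (s : G.S) {Φ : Set G.Play}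
    (h : MeasurableSet Φ) : mu σ1 σ2 s Φ = pr σ1 σ2 s Φ :=
  toMeasure_apply _ _ h

instance mu_prob (σ1 : G.Strategy1) (σ2 : G.Strategy2) (s : G.S) :
    IsProbabilityMeasure (mu σ1 σ2 s) := by
  refine ⟨?_⟩
  rw [mu_apply _ _ _ MeasurableSet.univ]
  refine le_antisymm ?_ (one_le_prOuter_univ σ1 σ2 s)
  refine (OuterMeasure.ofFunction_le _).trans ((iInf_le _ 0).trans ?_)
  refine (Finset.sum_le_sum fun w _ => ?_).trans (prefProb_sum σ1 σ2 s 0).le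
  split_ifs <;> simp

/-- The first `n` moves of a play. -/
def pfx (n : ℕ) (ρ : G.Play) : Fin n → G.Move := fun i => ρ i

lemma measurable_pfx (n : ℕ) : Measurable (pfx n : G.Play → Fin n → G.Move) :=
  measurable_pi_lambda _ fun i => measurable_pi_apply (i : ℕ)

lemma mu_pfx (σ1 : G.Strategy1) (σ2 : G.Strategy2) (s : G.S) (n : ℕ) (w : Fin n → G.Move) :
    mu σ1 σ2 s (pfx n ⁻¹' {w}) = prefProb σ1 σ2 [] s (List.ofFn w) := by
  have hle : ∀ w : Fin n → G.Move,
      mu σ1 σ2 s (pfx n ⁻¹' {w}) ≤ prefProb σ1 σ2 [] s (List.ofFn w) := by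
    intro w
    rw [mu_apply _ _ _ (measurable_pfx n (MeasurableSet.singleton w))]
    refine (OuterMeasure.ofFunction_le _).trans ((iInf_le _ n).trans ?_)
    rw [Finset.sum_eq_single w]
    · split_ifs <;> simp
    · intro w' _ hne
      refine if_neg ?_
      rintro ⟨ρ, hρ, hρ'⟩
      refine hne (funext fun i => ?_)
      rw [← hρ i, ← (hρ' : pfx n ρ = w)]
      rfl
    · simp
  have hsum : ∑ w : Fin n → G.Move, mu σ1 σ2 s (pfx n ⁻¹' {w}) = 1 := by
    have := sum_measure_preimage_singleton (μ := mu σ1 σ2 s) (f := pfx n) Finset.univ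
      (fun w _ => measurable_pfx n (MeasurableSet.singleton w))
    rw [this]; simp
  -- The left sides do not exceed the right sides, and both families sum to one.
  by_contra hne
  have hlt := lt_of_le_of_ne (hle w) hne
  have h3 : ∑ w : Fin n → G.Move, mu σ1 σ2 s (pfx n ⁻¹' {w}) <
      ∑ w : Fin n → G.Move, prefProb σ1 σ2 [] s (List.ofFn w) := by
    rw [← Finset.add_sum_erase _ _ (Finset.mem_univ w),
      ← Finset.add_sum_erase _ (fun w => prefProb σ1 σ2 [] s (List.ofFn w)) (Finset.mem_univ w)]
    refine ENNReal.add_lt_add_of_lt_of_le ?_ hlt (Finset.sum_le_sum fun w _ => hle w)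
    refine ne_top_of_le_ne_top ENNReal.one_ne_top ?_
    rw [← hsum]
    exact Finset.sum_le_sum_of_subset (Finset.erase_subset _ _)
  rw [hsum, prefProb_sum] at h3
  exact lt_irrefl _ h3

/-! ### Expectations of functions of a finite prefix -/

/-- Expectation of `F` at the prefix of length `n`. -/
noncomputable def Ex (σ1 : G.Strategy1) (σ2 : G.Strategy2) (s : G.S) (n : ℕ)
    (F : List G.Move → ℝ) : ℝ :=
  ∑ w : Fin n → G.Move, (prefProb σ1 σ2 [] s (List.ofFn w)).toReal * F (List.ofFn w)

/-- Conditional expectation of `f m` for the move `m` following the prefix `l`. -/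
noncomputable def cond (σ1 : G.Strategy1) (σ2 : G.Strategy2) (s : G.S) (l : List G.Move)
    (f : G.Move → ℝ) : ℝ :=
  ∑ m, (kap σ1 σ2 [] s l m).toReal * f m

lemma kap_sum_toReal (σ1 : G.Strategy1) (σ2 : G.Strategy2) (s : G.S) (l : List G.Move) :
    ∑ m, (kap σ1 σ2 [] s l m).toReal = 1 := by
  have h := kap_sum σ1 σ2 [] s l
  rw [← ENNReal.toReal_sum, h, ENNReal.toReal_one]
  intro m _ hm
  have := Finset.single_le_sum (f := fun m => kap σ1 σ2 [] s l m) (fun _ _ => zero_le)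
    (Finset.mem_univ m)
  rw [h, hm] at this
  simp at this

lemma cond_eq (σ1 : G.Strategy1) (σ2 : G.Strategy2) (s : G.S) (l : List G.Move)
    (f : G.Move → ℝ) :
    cond σ1 σ2 s l f = ∑ t, (nxt s l t).toReal * ∑ a, ∑ b,
      (σ1.play l t a).toReal * (σ2.play l t b).toReal * f (t, a, b) := by
  simp only [cond, kap, Fintype.sum_prod_type, ENNReal.toReal_mul, Finset.mul_sum,
    List.nil_append, mul_assoc]

lemma Ex_zero (σ1 : G.Strategy1) (σ2 : G.Strategy2) (s : G.S) (F : List G.Move → ℝ) :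
    Ex σ1 σ2 s 0 F = F [] := by
  simp [Ex, prefProb]

lemma Ex_succ (σ1 : G.Strategy1) (σ2 : G.Strategy2) (s : G.S) (n : ℕ)
    (F : List G.Move → ℝ) :
    Ex σ1 σ2 s (n + 1) F = Ex σ1 σ2 s n (fun l => cond σ1 σ2 s l fun m => F (l ++ [m])) := by
  unfold Ex cond
  rw [sum_snoc]
  refine Finset.sum_congr rfl fun w _ => ?_
  rw [Finset.mul_sum]
  refine Finset.sum_congr rfl fun m _ => ?_
  rw [ofFn_snoc, prefProb_append, ENNReal.toReal_mul, mul_assoc]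

lemma Ex_mono (σ1 : G.Strategy1) (σ2 : G.Strategy2) (s : G.S) (n : ℕ)
    (F F' : List G.Move → ℝ)
    (h : ∀ l : List G.Move, l.length = n → prefProb σ1 σ2 [] s l ≠ 0 → F l ≤ F' l) :
    Ex σ1 σ2 s n F ≤ Ex σ1 σ2 s n F' := by
  refine Finset.sum_le_sum fun w _ => ?_
  by_cases hw : prefProb σ1 σ2 [] s (List.ofFn w) = 0
  · simp [hw]
  · exact mul_le_mul_of_nonneg_left (h _ (by simp) hw) ENNReal.toReal_nonneg

lemma Ex_add (σ1 : G.Strategy1) (σ2 : G.Strategy2) (s : G.S) (n : ℕ)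
    (F F' : List G.Move → ℝ) :
    Ex σ1 σ2 s n (fun l => F l + F' l) = Ex σ1 σ2 s n F + Ex σ1 σ2 s n F' := by
  simp only [Ex, mul_add, Finset.sum_add_distrib]

lemma Ex_mul_const (σ1 : G.Strategy1) (σ2 : G.Strategy2) (s : G.S) (n : ℕ)
    (F : List G.Move → ℝ) (c : ℝ) :
    Ex σ1 σ2 s n (fun l => F l * c) = Ex σ1 σ2 s n F * c := by
  simp only [Ex, ← mul_assoc, Finset.sum_mul]

lemma integral_pfx (σ1 : G.Strategy1) (σ2 : G.Strategy2) (s : G.S) (n : ℕ)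
    (F : List G.Move → ℝ) :
    ∫ ρ, F (List.ofFn (pfx n ρ)) ∂(mu σ1 σ2 s) = Ex σ1 σ2 s n F := by
  have h := integral_map (μ := mu σ1 σ2 s) (measurable_pfx n).aemeasurable
    (f := fun w => F (List.ofFn w)) (measurable_of_finite _).aestronglyMeasurable
  rw [← h]
  have : IsProbabilityMeasure (Measure.map (pfx n) (mu σ1 σ2 s)) :=
    Measure.isProbabilityMeasure_map (measurable_pfx n).aemeasurable
  rw [integral_fintype (Integrable.of_finite)]
  refine Finset.sum_congr rfl fun w _ => ?_
  rw [Measure.real, Measure.map_apply (measurable_pfx n) (MeasurableSet.singleton w), mu_pfx,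
    smul_eq_mul]

end CGS

/-! ### Costs and long-run averages -/

namespace CGS

open MeasureTheory

variable {G : CGS}

/-- The cost of a move: one minus its reward. -/
def cost (m : G.Move) : ℝ := 1 - G.reward m.1 m.2.1 m.2.2

lemma cost_nonneg (m : G.Move) : 0 ≤ cost m := by
  rcases G.reward_bool m.1 m.2.1 m.2.2 with h | h <;> simp [cost, h]

lemma cost_le_one (m : G.Move) : cost m ≤ 1 := by
  rcases G.reward_bool m.1 m.2.1 m.2.2 with h | h <;> simp [cost, h]

/-- Total cost of a finite prefix. -/
def csum (l : List G.Move) : ℝ := (l.map cost).sum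

lemma csum_append (l : List G.Move) (m : G.Move) : csum (l ++ [m]) = csum l + cost m := by
  simp [csum]

lemma csum_pfx (n : ℕ) (ρ : G.Play) :
    csum (List.ofFn (pfx n ρ)) = ∑ i ∈ Finset.range n, cost (ρ i) := by
  rw [csum, List.map_ofFn, List.sum_ofFn, ← Fin.sum_univ_eq_sum_range (fun i => cost (ρ i))]
  rfl

lemma csum_pfx_nonneg (n : ℕ) (ρ : G.Play) : 0 ≤ csum (List.ofFn (pfx n ρ)) := by
  rw [csum_pfx]; exact Finset.sum_nonneg fun i _ => cost_nonneg _

lemma csum_pfx_le (n : ℕ) (ρ : G.Play) : csum (List.ofFn (pfx n ρ)) ≤ n := by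
  rw [csum_pfx]
  refine (Finset.sum_le_sum fun i _ => cost_le_one (ρ i)).trans ?_
  simp

lemma avg_eq (ρ : G.Play) {n : ℕ} (hn : 0 < n) :
    G.avg ρ n = 1 - csum (List.ofFn (pfx n ρ)) / n := by
  have hn' : (n : ℝ) ≠ 0 := by positivity
  rw [csum_pfx, avg]
  simp only [cost, Finset.sum_sub_distrib, Finset.sum_const, Finset.card_range, nsmul_eq_mul,
    mul_one]
  field_simp
  ring

lemma avg_nonneg (ρ : G.Play) (n : ℕ) : 0 ≤ G.avg ρ n := by
  refine div_nonneg (Finset.sum_nonneg fun i _ => ?_) (Nat.cast_nonneg n)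
  rcases G.reward_bool (ρ i).1 (ρ i).2.1 (ρ i).2.2 with h | h <;> simp [h]

lemma avg_le_one (ρ : G.Play) (n : ℕ) : G.avg ρ n ≤ 1 := by
  rcases Nat.eq_zero_or_pos n with rfl | hn
  · simp [avg]
  · rw [avg_eq ρ hn]
    have : 0 ≤ csum (List.ofFn (pfx n ρ)) / n :=
      div_nonneg (csum_pfx_nonneg n ρ) (Nat.cast_nonneg n)
    linarith

lemma isBoundedUnder_avg (ρ : G.Play) : IsBoundedUnder (· ≥ ·) atTop (G.avg ρ) :=
  isBoundedUnder_of ⟨0, avg_nonneg ρ⟩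

lemma isCoboundedUnder_avg (ρ : G.Play) : IsCoboundedUnder (· ≥ ·) atTop (G.avg ρ) :=
  (isBoundedUnder_of ⟨1, avg_le_one ρ⟩ : IsBoundedUnder (· ≤ ·) atTop (G.avg ρ)).isCoboundedUnder_ge

lemma measurable_avg (n : ℕ) : Measurable (fun ρ : G.Play => G.avg ρ n) := by
  refine Measurable.div_const (Finset.measurable_sum _ fun i _ => ?_) _
  exact (measurable_of_finite (fun m : G.Move => G.reward m.1 m.2.1 m.2.2)).comp
    (measurable_pi_apply i)

lemma measurableSet_evLimInfAvgGe (lam : ℝ) : MeasurableSet (G.evLimInfAvgGe lam) :=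
  measurableSet_le measurable_const (Measurable.liminf fun n => measurable_avg n)

lemma measurableSet_safe (U : Set G.S) : MeasurableSet (G.safe U) := by
  have : G.safe U = ⋂ i, (fun ρ : G.Play => ρ i) ⁻¹' {m | m.1 ∈ U} := by
    ext ρ; simp [safe]
  rw [this]
  exact MeasurableSet.iInter fun i => measurable_pi_apply i (MeasurableSet.of_discrete)

/-- By dominated convergence, an almost sure bound on the long-run average cost bounds the
expected average cost over long horizons. -/
lemma eventually_Ex_csum_le (σ1 : G.Strategy1) (σ2 : G.Strategy2) (s : G.S) {ε η : ℝ}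
    (hε : 0 < ε) (hη : 0 < η)
    (h : ∀ᵐ ρ ∂(mu σ1 σ2 s), ρ ∈ G.evLimInfAvgGe (1 - ε)) :
    ∀ᶠ n in atTop, Ex σ1 σ2 s n csum ≤ (ε + η) * n := by
  let g : ℕ → G.Play → ℝ := fun n ρ => max (csum (List.ofFn (pfx n ρ)) / n - (ε + η / 2)) 0
  have hmeas : ∀ n, Measurable (g n) := fun n => by
    have : Measurable (fun ρ : G.Play => csum (List.ofFn (pfx n ρ))) :=
      (measurable_of_finite (fun w : Fin n → G.Move => csum (List.ofFn w))).comp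
        (measurable_pfx n)
    exact ((this.div_const _).sub_const _).max measurable_const
  have hdiv : ∀ n (ρ : G.Play), csum (List.ofFn (pfx n ρ)) / n ≤ 1 := fun n ρ =>
    div_le_one_of_le₀ (csum_pfx_le n ρ) (Nat.cast_nonneg n)
  have hlim : Tendsto (fun n => ∫ ρ, g n ρ ∂(mu σ1 σ2 s)) atTop
      (nhds (∫ _ρ, (0 : ℝ) ∂(mu σ1 σ2 s))) := by
    refine tendsto_integral_of_dominated_convergence (fun _ => 1)
      (fun n => (hmeas n).aestronglyMeasurable) (integrable_const 1) (fun n => ?_) ?_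
    · refine ae_of_all _ fun ρ => ?_
      rw [Real.norm_of_nonneg (le_max_right _ _)]
      refine max_le ?_ zero_le_one
      linarith [hdiv n ρ]
    · filter_upwards [h] with ρ hρ
      have hρ' : 1 - ε - η / 2 < liminf (G.avg ρ) atTop :=
        lt_of_lt_of_le (by linarith) (hρ : 1 - ε ≤ liminf (G.avg ρ) atTop)
      have hev := eventually_lt_of_lt_liminf hρ' (isBoundedUnder_avg ρ)
      refine tendsto_const_nhds.congr' ?_
      filter_upwards [hev, eventually_gt_atTop 0] with n hn hn0
      rw [avg_eq ρ hn0] at hn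
      exact (max_eq_right (by linarith)).symm
  rw [integral_zero] at hlim
  filter_upwards [hlim.eventually (gt_mem_nhds (half_pos hη)), eventually_gt_atTop 0] with n hn hn0
  have hn0' : (0 : ℝ) < n := by exact_mod_cast hn0
  have hInt : Integrable (g n) (mu σ1 σ2 s) := by
    refine Integrable.of_bound (hmeas n).aestronglyMeasurable 1 (ae_of_all _ fun ρ => ?_)
    rw [Real.norm_of_nonneg (le_max_right _ _)]
    refine max_le ?_ zero_le_one
    linarith [hdiv n ρ]
  rw [← integral_pfx]
  calc ∫ ρ, csum (List.ofFn (pfx n ρ)) ∂(mu σ1 σ2 s)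
      ≤ ∫ ρ, (g n ρ + (ε + η / 2)) * n ∂(mu σ1 σ2 s) := by
        refine integral_mono_of_nonneg (ae_of_all _ fun ρ => csum_pfx_nonneg n ρ)
          ((hInt.add (integrable_const _)).mul_const _) (ae_of_all _ fun ρ => ?_)
        have := le_max_left (csum (List.ofFn (pfx n ρ)) / n - (ε + η / 2)) 0
        have h2 : csum (List.ofFn (pfx n ρ)) / n ≤ g n ρ + (ε + η / 2) := by
          simp only [g]; linarith
        exact (div_le_iff₀ hn0').1 h2
    _ = (∫ ρ, g n ρ ∂(mu σ1 σ2 s) + (ε + η / 2)) * n := by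
        rw [integral_mul_const, integral_add hInt (integrable_const _)]
        simp
    _ ≤ (ε + η) * n := by
        refine mul_le_mul_of_nonneg_right ?_ hn0'.le
        linarith

/-! ### A potential for each stationary strategy -/

/-- Linear-programming alternative: either the system `d ≤ T h` is solvable, or there is a nonzero
nonnegative functional annihilating the range of `T` and nonnegative at `d`. -/
lemma farkas {ι κ : Type} [Fintype ι] (T : (κ → ℝ) →ₗ[ℝ] (ι → ℝ)) (d : ι → ℝ)
    (hno : ¬ ∃ h, ∀ i, d i ≤ T h i) :
    ∃ x : ι → ℝ, (∀ i, 0 ≤ x i) ∧ (∃ i, 0 < x i) ∧ (∀ h, ∑ i, x i * T h i = 0) ∧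
      0 ≤ ∑ i, x i * d i := by
  let C : Set (ι → ℝ) := {v | ∀ i, d i < v i}
  have hCo : IsOpen C := by
    have : C = ⋂ i, {v : ι → ℝ | d i < v i} := by ext v; simp [C]
    rw [this]
    exact isOpen_iInter_of_finite fun i => isOpen_lt continuous_const (continuous_apply i)
  have hCc : Convex ℝ C := by
    have : C = ⋂ i, {v : ι → ℝ | d i < v i} := by ext v; simp [C]
    rw [this]
    exact convex_iInter fun i => convex_halfSpace_gt
      (LinearMap.proj (R := ℝ) (φ := fun _ : ι => ℝ) i).isLinear (d i)
  have hdisj : Disjoint C (LinearMap.range T : Set (ι → ℝ)) := by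
    rw [Set.disjoint_left]
    rintro v hv ⟨h, rfl⟩
    exact hno ⟨h, fun i => (hv i).le⟩
  obtain ⟨f, u, hfC, hfL⟩ := geometric_hahn_banach_open hCc hCo
    (LinearMap.range T).convex hdisj
  have hu : u ≤ 0 := by simpa using hfL 0 (Submodule.zero_mem _)
  -- A functional that is bounded below on a subspace vanishes on it.
  have hf0 : ∀ h, f (T h) = 0 := by
    intro h
    by_contra hne
    have := hfL (T (((u - 1) / f (T h)) • h)) ⟨_, rfl⟩
    rw [map_smul, map_smul, smul_eq_mul, div_mul_cancel₀ _ hne] at this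
    linarith
  let x : ι → ℝ := fun i => - f (Pi.single i 1)
  have hfx : ∀ v : ι → ℝ, f v = - ∑ i, x i * v i := by
    intro v
    conv_lhs => rw [pi_eq_sum_univ' v]
    simp only [map_sum, map_smul, x, smul_eq_mul, neg_mul, Finset.sum_neg_distrib, neg_neg]
    exact Finset.sum_congr rfl fun i _ => by
      rw [mul_comm]
  have hdir : ∀ y : ι → ℝ, (∀ i, 0 ≤ y i) → 0 ≤ ∑ i, x i * y i := by
    intro y hy
    by_contra hlt
    push Not at hlt
    set a := ∑ i, x i * y i with ha
    set b := ∑ i, x i * (d i + 1) with hb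
    have hmem : (fun i => (d i + 1) + (|b| / (-a)) * y i) ∈ C := by
      intro i
      have : 0 ≤ (|b| / (-a)) * y i :=
        mul_nonneg (div_nonneg (abs_nonneg _) (by linarith)) (hy i)
      show d i < d i + 1 + _
      linarith
    have := hfC _ hmem
    rw [hfx] at this
    have h2 : ∑ i, x i * ((d i + 1) + (|b| / (-a)) * y i) = b - |b| := by
      calc _ = b + (|b| / (-a)) * a := by
            rw [ha, hb, Finset.mul_sum, ← Finset.sum_add_distrib]
            exact Finset.sum_congr rfl fun i _ => by ring
        _ = b - |b| := by
            have : -a ≠ 0 := by linarith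
            have : a ≠ 0 := by linarith
            field_simp
            ring
    rw [h2] at this
    linarith [le_abs_self b]
  have hxnn : ∀ i, 0 ≤ x i := by
    intro i
    have := hdir (Pi.single i 1) (fun j => by
      rcases eq_or_ne j i with rfl | hj
      · simp
      · simp [hj])
    simpa [Pi.single_apply] using this
  refine ⟨x, hxnn, ?_, fun h => by have := hf0 h; rw [hfx] at this; linarith, ?_⟩
  · by_contra hz
    push Not at hz
    have hx0 : ∀ i, x i = 0 := fun i => le_antisymm (hz i) (hxnn i)
    have := hfC (fun i => d i + 1) (fun i => by simp)
    rw [hfx] at this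
    simp [hx0] at this
    linarith
  · by_contra hlt
    push Not at hlt
    -- A small positive shift of `d` lies in `C` but still has negative value.
    set a := ∑ i, x i * d i with ha
    have hX : 0 ≤ ∑ i, x i := Finset.sum_nonneg fun i _ => hxnn i
    set X := ∑ i, x i with hXd
    have hpos : 0 < -a / (X + 1) := div_pos (by linarith) (by linarith)
    have := hfC (fun i => d i + -a / (X + 1)) (fun i => by simpa using hpos)
    rw [hfx] at this
    have h2 : ∑ i, x i * (d i + -a / (X + 1)) = a + X * (-a / (X + 1)) := by
      rw [ha, hXd, Finset.sum_mul, ← Finset.sum_add_distrib]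
      exact Finset.sum_congr rfl fun i _ => by ring
    rw [h2] at this
    have h3 : X * (-a / (X + 1)) ≤ -a := by
      rw [mul_div_assoc', div_le_iff₀ (by linarith)]
      nlinarith
    linarith

end CGS

namespace CGS

open MeasureTheory

variable {G : CGS}

/-- A stationary strategy of player 2 realising the conditional laws of a nonnegative weight `x`
on state-action pairs. -/
lemma exists_conditional_strategy (x : G.S × G.A → ℝ) (hx : ∀ p, 0 ≤ x p)
    (hsupp : ∀ s b, x (s, b) ≠ 0 → b ∈ G.moves2 s) :
    ∃ σ2 : G.Strategy2, σ2.Stationary ∧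
      ∀ s b, (∑ b', x (s, b')) * (σ2.play [] s b).toReal = x (s, b) := by
  have key : ∀ s, ∃ p : PMF G.A, (∀ b, p b ≠ 0 → b ∈ G.moves2 s) ∧
      ∀ b, (∑ b', x (s, b')) * (p b).toReal = x (s, b) := by
    intro s
    have hX : 0 ≤ ∑ b', x (s, b') := Finset.sum_nonneg fun b _ => hx _
    rcases hX.eq_or_lt with h0 | hpos
    · refine ⟨PMF.pure (G.moves2_nonempty s).choose, fun b hb => ?_, fun b => ?_⟩
      · by_cases hbe : b = (G.moves2_nonempty s).choose
        · rw [hbe]; exact (G.moves2_nonempty s).choose_spec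
        · simp [PMF.pure_apply, hbe] at hb
      · rw [← h0, zero_mul]
        exact ((Finset.sum_eq_zero_iff_of_nonneg fun b _ => hx (s, b)).1 h0.symm b
          (Finset.mem_univ b)).symm
    · refine ⟨PMF.ofFintype (fun b => ENNReal.ofReal (x (s, b) / ∑ b', x (s, b'))) ?_,
        fun b hb => hsupp s b ?_, fun b => ?_⟩
      · rw [← ENNReal.ofReal_sum_of_nonneg fun b _ => div_nonneg (hx _) hX, ← Finset.sum_div,
          div_self hpos.ne', ENNReal.ofReal_one]
      · intro h0
        simp [h0] at hb
      · rw [PMF.ofFintype_apply, ENNReal.toReal_ofReal (div_nonneg (hx _) hX),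
          mul_div_cancel₀ _ hpos.ne']
  choose p hp1 hp2 using key
  exact ⟨⟨fun _ s => p s, fun _ s a ha => hp1 s a ha⟩, fun _ _ _ => rfl, hp2⟩

lemma ae_mem_of_pr_eq_one (σ1 : G.Strategy1) (σ2 : G.Strategy2) (s : G.S) {Φ : Set G.Play}
    (hΦ : MeasurableSet Φ) (h : pr σ1 σ2 s Φ = 1) : ∀ᵐ ρ ∂(mu σ1 σ2 s), ρ ∈ Φ := by
  rw [← mu_apply _ _ _ hΦ] at h
  exact (prob_compl_eq_zero_iff hΦ).2 h

/-- Expected value of `f` at the next move, for stationary strategies and a given last move. -/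
noncomputable def step (σ1 : G.Strategy1) (σ2 : G.Strategy2) (f : G.Move → ℝ) (m : G.Move) : ℝ :=
  ∑ t, (G.trans m.1 m.2.1 m.2.2 t).toReal * ∑ a, ∑ b,
      (σ1.play [] t a).toReal * (σ2.play [] t b).toReal * f (t, a, b)

/-- If player 2 plays the conditional laws of an invariant weight `x`, and the start state is
weighted by the marginal of `x`, the expected value of any function of the current move is the
same at all times. -/
lemma invariant_expectation (σ1 : G.Strategy1) (σ2 : G.Strategy2) (h1 : σ1.Stationary)
    (h2 : σ2.Stationary) (x : G.S × G.A → ℝ)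
    (hx : ∀ s b, (∑ b', x (s, b')) * (σ2.play [] s b).toReal = x (s, b))
    (hinv : ∀ φ : G.S → ℝ, ∑ s, ∑ b, x (s, b) * φ s =
      ∑ s, ∑ b, x (s, b) * ∑ a, (σ1.play [] s a).toReal *
        ∑ t, (G.trans s a b t).toReal * φ t)
    (n : ℕ) : ∀ f : G.Move → ℝ,
      ∑ s, (∑ b, x (s, b)) * Ex σ1 σ2 s n (fun l => cond σ1 σ2 s l f) =
        ∑ s, ∑ b, x (s, b) * ∑ a, (σ1.play [] s a).toReal * f (s, a, b) := by
  induction n with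
  | zero =>
    intro f
    refine Finset.sum_congr rfl fun s _ => ?_
    rw [Ex_zero, cond_eq]
    simp only [nxt, List.getLast?_nil, Option.elim_none, PMF.pure_apply]
    rw [Finset.sum_eq_single s (fun t _ ht => by simp [ht]) (by simp), if_pos rfl,
      ENNReal.toReal_one, one_mul, Finset.sum_comm, Finset.mul_sum]
    refine Finset.sum_congr rfl fun b _ => ?_
    rw [← hx s b, Finset.mul_sum, Finset.mul_sum]
    exact Finset.sum_congr rfl fun a _ => by ring
  | succ n ih =>
    intro f
    have hstep : ∀ s, Ex σ1 σ2 s (n + 1) (fun l => cond σ1 σ2 s l f) =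
        Ex σ1 σ2 s n (fun l => cond σ1 σ2 s l (step σ1 σ2 f)) := by
      intro s
      rw [Ex_succ]
      congr 1
      funext l
      congr 1
      funext m
      rw [cond_eq, nxt_append]
      simp only [step, h1 (l ++ [m]) [], h2 (l ++ [m]) []]
    simp only [hstep]
    rw [ih]
    simp only [step]
    rw [← hinv (fun t => ∑ a, ∑ b,
      (σ1.play [] t a).toReal * (σ2.play [] t b).toReal * f (t, a, b))]
    refine Finset.sum_congr rfl fun s _ => ?_
    rw [← Finset.sum_mul, Finset.sum_comm, Finset.mul_sum]
    refine Finset.sum_congr rfl fun b _ => ?_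
    rw [← hx s b, Finset.mul_sum, Finset.mul_sum]
    exact Finset.sum_congr rfl fun a _ => by ring

lemma Ex_csum_succ (σ1 : G.Strategy1) (σ2 : G.Strategy2) (s : G.S) (n : ℕ) :
    Ex σ1 σ2 s (n + 1) csum =
      Ex σ1 σ2 s n csum + Ex σ1 σ2 s n (fun l => cond σ1 σ2 s l cost) := by
  rw [Ex_succ, ← Ex_add]
  congr 1
  funext l
  simp only [csum_append, cond, mul_add, Finset.sum_add_distrib]
  rw [← Finset.sum_mul, kap_sum_toReal, one_mul]

/-- A stationary strategy keeping the long-run average cost below `ε` almost surely from every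
state of `U` admits a potential `φ` certifying expected one-step cost at most `2 * ε` on `U`.
Otherwise linear-programming duality yields an invariant weight of average cost at least `2 * ε`,
and player 2 realises this average by playing the conditional laws of that weight. -/
lemma exists_potential (U : Set G.S) (σ1 : G.Strategy1) (h1 : σ1.Stationary) {ε : ℝ}
    (hε : 0 < ε)
    (h : ∀ σ2 : G.Strategy2, ∀ s ∈ U, ∀ᵐ ρ ∂(mu σ1 σ2 s), ρ ∈ G.evLimInfAvgGe (1 - ε)) :
    ∃ φ : G.S → ℝ, ∀ s ∈ U, ∀ b ∈ G.moves2 s,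
      ∑ a, (σ1.play [] s a).toReal *
        (cost (s, a, b) + ∑ t, (G.trans s a b t).toReal * φ t) ≤ 2 * ε + φ s := by
  let I : G.S × G.A → Prop := fun p => p.1 ∈ U ∧ p.2 ∈ G.moves2 p.1
  let P : (G.S → ℝ) → G.S × G.A → ℝ := fun φ p =>
    ∑ a, (σ1.play [] p.1 a).toReal * ∑ t, (G.trans p.1 a p.2 t).toReal * φ t
  let c : G.S × G.A → ℝ := fun p => ∑ a, (σ1.play [] p.1 a).toReal * cost (p.1, a, p.2)
  let T : (G.S → ℝ) →ₗ[ℝ] (G.S × G.A → ℝ) :=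
    { toFun := fun φ p => if I p then φ p.1 - P φ p else 0
      map_add' := by
        intro φ ψ
        funext p
        by_cases hp : I p
        · simp only [P, Pi.add_apply, if_pos hp, mul_add, Finset.sum_add_distrib]
          ring
        · simp [hp]
      map_smul' := by
        intro r φ
        funext p
        by_cases hp : I p
        · simp only [P, Pi.smul_apply, if_pos hp, smul_eq_mul, RingHom.id_apply, mul_sub,
            Finset.mul_sum]
          congr 1
          exact Finset.sum_congr rfl fun a _ => Finset.sum_congr rfl fun t _ => by ring
        · simp [hp] }
  -- Pairs outside `I` impose the void constraint `-1 ≤ 0`.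
  let d : G.S × G.A → ℝ := fun p => if I p then c p - 2 * ε else -1
  by_contra hno
  obtain ⟨y, hy0, ⟨i0, hi0⟩, hyT, hyd⟩ := farkas T d (by
    rintro ⟨φ, hφ⟩
    refine hno ⟨φ, fun s hs b hb => ?_⟩
    have hI : I (s, b) := ⟨hs, hb⟩
    have := hφ (s, b)
    simp only [d, T, LinearMap.coe_mk, AddHom.coe_mk, if_pos hI, c, P] at this
    simp only [mul_add, Finset.sum_add_distrib]
    linarith)
  let x : G.S × G.A → ℝ := fun p => if I p then y p else 0
  have hx0 : ∀ p, 0 ≤ x p := fun p => by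
    by_cases hp : I p
    · simpa [x, hp] using hy0 p
    · simp [x, hp]
  have hxd : ∑ p, y p * d p = ∑ p, x p * (c p - 2 * ε) - ∑ p, (y p - x p) := by
    rw [← Finset.sum_sub_distrib]
    refine Finset.sum_congr rfl fun p _ => ?_
    by_cases hp : I p
    · simp [x, d, hp]
    · simp [x, d, hp]
  have hyx : ∀ p, 0 ≤ y p - x p := fun p => by
    by_cases hp : I p
    · simp [x, hp]
    · simpa [x, hp] using hy0 p
  have hyxs : 0 ≤ ∑ p, (y p - x p) := Finset.sum_nonneg fun p _ => hyx p
  have hxc : 0 ≤ ∑ p, x p * (c p - 2 * ε) := by linarith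
  have hxpos : 0 < ∑ p, x p := by
    refine lt_of_le_of_ne (Finset.sum_nonneg fun p _ => hx0 p) fun h0 => ?_
    have hz := (Finset.sum_eq_zero_iff_of_nonneg fun p _ => hx0 p).1 h0.symm
    have : ∑ p, x p * (c p - 2 * ε) = 0 :=
      Finset.sum_eq_zero fun p hp => by rw [hz p hp, zero_mul]
    have h3 : 0 < ∑ p, (y p - x p) := by
      refine lt_of_lt_of_le hi0 ?_
      have := Finset.single_le_sum (f := fun p => y p - x p) (fun p _ => hyx p)
        (Finset.mem_univ i0)
      simpa [hz i0 (Finset.mem_univ _)] using this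
    linarith
  have hxT : ∀ φ : G.S → ℝ, ∑ p, x p * φ p.1 = ∑ p, x p * P φ p := by
    intro φ
    have h2 := hyT φ
    rw [← sub_eq_zero, ← Finset.sum_sub_distrib, ← h2]
    refine Finset.sum_congr rfl fun p _ => ?_
    by_cases hp : I p
    · simp only [x, T, LinearMap.coe_mk, AddHom.coe_mk, if_pos hp]; ring
    · simp [x, T, hp]
  obtain ⟨σ2, hσ2, hσx⟩ := exists_conditional_strategy x hx0 (fun s b hb => by
    by_contra hn
    exact hb (if_neg fun hI : I (s, b) => hn hI.2))
  have hinv := fun n => invariant_expectation σ1 σ2 h1 hσ2 x hσx (fun φ => by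
    have := hxT φ
    rwa [Fintype.sum_prod_type, Fintype.sum_prod_type] at this) n cost
  have htot : ∀ n : ℕ, ∑ s, (∑ b, x (s, b)) * Ex σ1 σ2 s n csum = n * ∑ p, x p * c p := by
    intro n
    induction n with
    | zero => simp [Ex_zero, csum]
    | succ n ih =>
      simp only [Ex_csum_succ, mul_add, Finset.sum_add_distrib]
      rw [ih, hinv n, Fintype.sum_prod_type]
      push_cast
      ring
  have hev : ∀ᶠ n in atTop, ∀ s ∈ U, Ex σ1 σ2 s n csum ≤ (ε + ε / 2) * n := by
    have : ∀ s : G.S, ∀ᶠ n in atTop, s ∈ U → Ex σ1 σ2 s n csum ≤ (ε + ε / 2) * n := by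
      intro s
      by_cases hs : s ∈ U
      · filter_upwards [eventually_Ex_csum_le σ1 σ2 s hε (half_pos hε) (h σ2 s hs)] with n hn _
        exact hn
      · exact Eventually.of_forall fun n hs' => absurd hs' hs
    exact eventually_all.2 this
  obtain ⟨n, hn, hn0⟩ := (hev.and (eventually_gt_atTop 0)).exists
  have hn0' : (0 : ℝ) < n := by exact_mod_cast hn0
  have hle : ∑ s, (∑ b, x (s, b)) * Ex σ1 σ2 s n csum ≤ (∑ p, x p) * ((ε + ε / 2) * n) := by
    rw [Fintype.sum_prod_type, Finset.sum_mul]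
    refine Finset.sum_le_sum fun s _ => ?_
    by_cases hs : s ∈ U
    · exact mul_le_mul_of_nonneg_left (hn s hs) (Finset.sum_nonneg fun b _ => hx0 _)
    · have : ∑ b, x (s, b) = 0 :=
        Finset.sum_eq_zero fun b _ => if_neg fun hI : I (s, b) => hs hI.1
      simp [this]
  rw [htot] at hle
  have hxc' : (∑ p, x p) * (2 * ε) ≤ ∑ p, x p * c p := by
    rw [Finset.sum_mul]
    have : ∑ p, x p * (c p - 2 * ε) = ∑ p, x p * c p - ∑ p, x p * (2 * ε) := by
      rw [← Finset.sum_sub_distrib]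
      exact Finset.sum_congr rfl fun p _ => by ring
    linarith
  have h5 : n * ((∑ p, x p) * (2 * ε)) ≤ (∑ p, x p) * ((ε + ε / 2) * n) :=
    (mul_le_mul_of_nonneg_left hxc' hn0'.le).trans hle
  have h6 : 0 < (∑ p, x p) * ε * n := by positivity
  nlinarith

/-- Almost sure safety of a stationary strategy is a local closure property of `U`. -/
lemma closed_of_safe (U : Set G.S) (σ1 : G.Strategy1) (h1 : σ1.Stationary)
    (h : ∀ σ2 : G.Strategy2, ∀ s ∈ U, ∀ᵐ ρ ∂(mu σ1 σ2 s), ρ ∈ G.safe U)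
    {s : G.S} (hs : s ∈ U) {a b : G.A} {t : G.S} (ha : σ1.play [] s a ≠ 0)
    (hb : b ∈ G.moves2 s) (ht : G.trans s a b t ≠ 0) : t ∈ U := by
  by_contra htU
  let σ2 : G.Strategy2 :=
    ⟨fun _ u => PMF.pure (if u = s then b else (G.moves2_nonempty u).choose), fun _ u c hc => by
      by_cases hu : u = s
      · subst hu
        by_cases hcb : c = b
        · rwa [hcb]
        · simp [PMF.pure_apply, hcb] at hc
      · by_cases hcb : c = (G.moves2_nonempty u).choose
        · rw [hcb]; exact (G.moves2_nonempty u).choose_spec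
        · simp [PMF.pure_apply, hu, hcb] at hc⟩
  obtain ⟨a', ha'⟩ := (σ1.play [] t).support_nonempty
  obtain ⟨b', hb'⟩ := (σ2.play [] t).support_nonempty
  rw [PMF.mem_support_iff] at ha' hb'
  have hpos : prefProb σ1 σ2 [] s (List.ofFn ![(s, a, b), (t, a', b')]) ≠ 0 := by
    have h3 : σ1.play [(s, a, b)] t a' ≠ 0 := by rwa [h1 _ []]
    have h4 : σ2.play [(s, a, b)] t b' ≠ 0 := hb'
    have h5 : σ2.play [] s b ≠ 0 := by simp [σ2]
    simp only [List.ofFn_succ, List.ofFn_zero, Matrix.cons_val_zero, Matrix.cons_val_succ,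
      prefProb, if_true, List.nil_append, mul_one]
    exact mul_ne_zero (mul_ne_zero ha h5) (mul_ne_zero ht (mul_ne_zero h3 h4))
  rw [← mu_pfx] at hpos
  refine hpos (measure_mono_null ?_ (h σ2 s hs))
  intro ρ hρ hsafe
  have h6 : pfx 2 ρ 1 = (t, a', b') := by rw [show pfx 2 ρ = _ from hρ]; rfl
  have h7 : ρ 1 = (t, a', b') := h6
  have h8 := hsafe 1
  rw [h7] at h8
  exact htU h8

end CGS

/-! ### Exponential supermartingale for a slowly varying strategy -/

namespace CGS

open MeasureTheory

variable {G : CGS}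

/-- What the player-1 strategy uses at time `n`: a mixed action for each state (`q n`), a potential
(`φ n`) and a drift allowance (`e n`). The potentials are nonpositive and decrease with time, so
that a change of potential never increases the supermartingale `Schedule.Y`. -/
structure Schedule (G : CGS) (U : Set G.S) where
  /-- mixed actions at time `n` -/
  q : ℕ → G.S → PMF G.A
  /-- potential at time `n` -/
  φ : ℕ → G.S → ℝ
  /-- drift allowance at time `n` -/
  e : ℕ → ℝ
  /-- bound on the potential at time `n` -/
  B : ℕ → ℝ
  q_mem : ∀ n s a, q n s a ≠ 0 → a ∈ G.moves1 s
  drift : ∀ n, ∀ s ∈ U, ∀ b ∈ G.moves2 s,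
    ∑ a, (q n s a).toReal * (cost (s, a, b) + ∑ t, (G.trans s a b t).toReal * φ n t) ≤ e n + φ n s
  closed : ∀ n, ∀ s ∈ U, ∀ a, q n s a ≠ 0 → ∀ b ∈ G.moves2 s, ∀ t, G.trans s a b t ≠ 0 → t ∈ U
  φ_anti : ∀ n s, φ (n + 1) s ≤ φ n s
  φ_nonpos : ∀ n s, φ n s ≤ 0
  φ_ge : ∀ n s, -B n ≤ φ n s
  B_mono : Monotone B
  e_nonneg : ∀ n, 0 ≤ e n
  e_le : ∀ n, e n ≤ 2
  B_growth : ∀ᶠ n : ℕ in atTop, (2 + B n) ^ 4 ≤ n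
  e_tendsto : Tendsto e atTop (nhds 0)

namespace Schedule

variable {U : Set G.S} (D : Schedule G U)

/-- The Markov strategy that plays `q n` at time `n`. -/
noncomputable def strat : G.Strategy1 where
  play l s := D.q l.length s
  play_mem l s a h := D.q_mem l.length s a h

lemma strat_markov : D.strat.Markov := by
  intro l l' s h
  simp [strat, h]

/-- Cumulated cost minus drift allowances, plus the expected potential of the next state. -/
noncomputable def Y (s : G.S) (l : List G.Move) : ℝ :=
  csum l - ∑ i ∈ Finset.range l.length, D.e i + ∑ t, (nxt s l t).toReal * D.φ l.length t

lemma nxt_mem (σ2 : G.Strategy2) {s : G.S} (hs : s ∈ U) (l : List G.Move) :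
    prefProb D.strat σ2 [] s l ≠ 0 → ∀ t, nxt s l t ≠ 0 → t ∈ U := by
  induction l using List.reverseRecOn with
  | nil =>
    intro _ t ht
    by_cases hts : t = s
    · rwa [hts]
    · simp [nxt, PMF.pure_apply, hts] at ht
  | append_singleton l m ih =>
    intro hp t ht
    rw [prefProb_append] at hp
    have h1 := left_ne_zero_of_mul hp
    have h2 := right_ne_zero_of_mul hp
    rw [kap, List.nil_append] at h2
    have h3 := right_ne_zero_of_mul h2
    rw [nxt_append] at ht
    exact D.closed l.length m.1 (ih h1 _ (left_ne_zero_of_mul h2)) m.2.1 (left_ne_zero_of_mul h3)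
      m.2.2 (σ2.play_mem _ _ _ (right_ne_zero_of_mul h3)) t ht

lemma avg_φ_le (p : PMF G.S) (n : ℕ) : ∑ t, (p t).toReal * D.φ n t ≤ 0 :=
  Finset.sum_nonpos fun t _ => mul_nonpos_of_nonneg_of_nonpos ENNReal.toReal_nonneg
    (D.φ_nonpos n t)

lemma le_avg_φ (p : PMF G.S) (n : ℕ) : -D.B n ≤ ∑ t, (p t).toReal * D.φ n t := by
  calc -D.B n = ∑ t, (p t).toReal * (-D.B n) := by
        rw [← Finset.sum_mul, pmf_sum_toReal, one_mul]
    _ ≤ _ := Finset.sum_le_sum fun t _ =>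
        mul_le_mul_of_nonneg_left (D.φ_ge n t) ENNReal.toReal_nonneg

/-- Increment of `Y` when the move `m` is appended to `l`. -/
noncomputable def inc (s : G.S) (l : List G.Move) (m : G.Move) : ℝ :=
  (cost m + ∑ t, (G.trans m.1 m.2.1 m.2.2 t).toReal * D.φ (l.length + 1) t) -
    (D.e l.length + ∑ t, (nxt s l t).toReal * D.φ l.length t)

lemma Y_append (s : G.S) (l : List G.Move) (m : G.Move) :
    D.Y s (l ++ [m]) = D.Y s l + D.inc s l m := by
  simp only [Y, inc, csum_append, nxt_append, List.length_append, List.length_singleton,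
    Finset.sum_range_succ]
  ring

/-- The two potential terms both lie in `[-B (n + 1), 0]` for `n = l.length`, so their difference
costs `B (n + 1)` only once. -/
lemma abs_inc_le (s : G.S) (l : List G.Move) (m : G.Move) :
    |D.inc s l m| ≤ 2 + D.B (l.length + 1) := by
  have h1 := D.avg_φ_le (G.trans m.1 m.2.1 m.2.2) (l.length + 1)
  have h2 := D.le_avg_φ (G.trans m.1 m.2.1 m.2.2) (l.length + 1)
  have h3 := D.avg_φ_le (nxt s l) l.length
  have h4 := D.le_avg_φ (nxt s l) l.length
  have h5 := D.B_mono (Nat.le_succ l.length)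
  have h6 := D.e_nonneg l.length
  have h7 := D.e_le l.length
  have h8 := cost_nonneg m
  have h9 := cost_le_one m
  simp only [Nat.succ_eq_add_one] at h5
  rw [abs_le, inc]
  constructor <;> linarith

/-- The supermartingale property of `Y`. -/
lemma cond_inc_nonpos (σ2 : G.Strategy2) {s : G.S} (hs : s ∈ U) (l : List G.Move)
    (hl : prefProb D.strat σ2 [] s l ≠ 0) : cond D.strat σ2 s l (D.inc s l) ≤ 0 := by
  set F : G.Move → ℝ := fun m =>
    cost m + ∑ t, (G.trans m.1 m.2.1 m.2.2 t).toReal * D.φ (l.length + 1) t with hF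
  set c0 := D.e l.length + ∑ t, (nxt s l t).toReal * D.φ l.length t with hc0
  have h1 : cond D.strat σ2 s l (D.inc s l) = cond D.strat σ2 s l F - c0 := by
    simp only [cond, inc, mul_sub, Finset.sum_sub_distrib]
    rw [← Finset.sum_mul, kap_sum_toReal, one_mul]
  rw [h1, sub_nonpos, cond_eq]
  have h2 : c0 = ∑ t, (nxt s l t).toReal * (D.e l.length + D.φ l.length t) := by
    simp only [mul_add, Finset.sum_add_distrib]
    rw [← Finset.sum_mul, pmf_sum_toReal, one_mul]
  rw [h2]
  refine Finset.sum_le_sum fun t _ => ?_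
  by_cases ht : nxt s l t = 0
  · simp [ht]
  refine mul_le_mul_of_nonneg_left ?_ ENNReal.toReal_nonneg
  have htU := D.nxt_mem σ2 hs l hl t ht
  rw [Finset.sum_comm]
  calc ∑ b, ∑ a, (D.strat.play l t a).toReal * (σ2.play l t b).toReal * F (t, a, b)
      = ∑ b, (σ2.play l t b).toReal * ∑ a, (D.q l.length t a).toReal * F (t, a, b) := by
        refine Finset.sum_congr rfl fun b _ => ?_
        rw [Finset.mul_sum]
        refine Finset.sum_congr rfl fun a _ => ?_
        simp only [strat]
        ring
    _ ≤ ∑ b, (σ2.play l t b).toReal * (D.e l.length + D.φ l.length t) := by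
        refine Finset.sum_le_sum fun b _ => ?_
        by_cases hb : σ2.play l t b = 0
        · simp [hb]
        refine mul_le_mul_of_nonneg_left ?_ ENNReal.toReal_nonneg
        refine le_trans ?_ (D.drift l.length t htU b (σ2.play_mem l t b hb))
        refine Finset.sum_le_sum fun a _ => mul_le_mul_of_nonneg_left ?_ ENNReal.toReal_nonneg
        simp only [hF]
        gcongr with u
        exact D.φ_anti _ _
    _ = D.e l.length + D.φ l.length t := by
        rw [← Finset.sum_mul, pmf_sum_toReal, one_mul]

/-- The supermartingale property of `Y` at the exponential level, from
`exp x ≤ 1 + x + x ^ 2` for `|x| ≤ 1`: each step costs at most the factor `exp (lam ^ 2 * K ^ 2)`. -/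
lemma cond_exp_le (σ2 : G.Strategy2) {s : G.S} (hs : s ∈ U) (l : List G.Move)
    (hl : prefProb D.strat σ2 [] s l ≠ 0) {lam K : ℝ} (hlam : 0 ≤ lam)
    (hK : 2 + D.B (l.length + 1) ≤ K) (hlK : lam * K ≤ 1) :
    cond D.strat σ2 s l (fun m => Real.exp (lam * D.Y s (l ++ [m]))) ≤
      Real.exp (lam * D.Y s l) * Real.exp (lam ^ 2 * K ^ 2) := by
  have hpt : ∀ m, Real.exp (lam * D.Y s (l ++ [m])) ≤
      Real.exp (lam * D.Y s l) * (1 + lam ^ 2 * K ^ 2 + lam * D.inc s l m) := by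
    intro m
    rw [Y_append, mul_add, Real.exp_add]
    refine mul_le_mul_of_nonneg_left ?_ (Real.exp_pos _).le
    have h1 : |D.inc s l m| ≤ K := (D.abs_inc_le s l m).trans hK
    have h2 : |lam * D.inc s l m| ≤ lam * K := by
      rw [abs_mul, abs_of_nonneg hlam]
      exact mul_le_mul_of_nonneg_left h1 hlam
    have h3 := (abs_le.1 (Real.abs_exp_sub_one_sub_id_le (h2.trans hlK))).2
    have h4 : (lam * D.inc s l m) ^ 2 ≤ (lam * K) ^ 2 := by
      rw [← sq_abs]
      exact pow_le_pow_left₀ (abs_nonneg _) h2 2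
    rw [mul_pow lam K] at h4
    linarith
  have hc := D.cond_inc_nonpos σ2 hs l hl
  calc cond D.strat σ2 s l (fun m => Real.exp (lam * D.Y s (l ++ [m])))
      ≤ cond D.strat σ2 s l (fun m =>
          Real.exp (lam * D.Y s l) * (1 + lam ^ 2 * K ^ 2 + lam * D.inc s l m)) :=
        Finset.sum_le_sum fun m _ => mul_le_mul_of_nonneg_left (hpt m) ENNReal.toReal_nonneg
    _ = Real.exp (lam * D.Y s l) *
          (1 + lam ^ 2 * K ^ 2 + lam * cond D.strat σ2 s l (D.inc s l)) := by
        have h0 := kap_sum_toReal D.strat σ2 s l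
        simp only [cond]
        calc _ = Real.exp (lam * D.Y s l) *
              ((∑ m, (kap D.strat σ2 [] s l m).toReal) * (1 + lam ^ 2 * K ^ 2) +
                lam * ∑ m, (kap D.strat σ2 [] s l m).toReal * D.inc s l m) := by
              rw [Finset.sum_mul, Finset.mul_sum, ← Finset.sum_add_distrib, Finset.mul_sum]
              exact Finset.sum_congr rfl fun m _ => by ring
          _ = _ := by rw [h0, one_mul]
    _ ≤ Real.exp (lam * D.Y s l) * Real.exp (lam ^ 2 * K ^ 2) := by
        refine mul_le_mul_of_nonneg_left ?_ (Real.exp_pos _).le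
        have := Real.add_one_le_exp (lam ^ 2 * K ^ 2)
        have := mul_nonpos_of_nonneg_of_nonpos hlam hc
        linarith

lemma Ex_exp_le (σ2 : G.Strategy2) {s : G.S} (hs : s ∈ U) {lam K : ℝ} (hlam : 0 ≤ lam)
    (hlK : lam * K ≤ 1) (n : ℕ) (hK : 2 + D.B n ≤ K) :
    Ex D.strat σ2 s n (fun l => Real.exp (lam * D.Y s l)) ≤ Real.exp (n * (lam ^ 2 * K ^ 2)) := by
  induction n with
  | zero =>
    rw [Ex_zero]
    simp only [Nat.cast_zero, zero_mul, Real.exp_zero, Real.exp_le_one_iff]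
    have := D.avg_φ_le (nxt s []) 0
    refine mul_nonpos_of_nonneg_of_nonpos hlam ?_
    simpa [Y, csum] using this
  | succ n ih =>
    have hK' : 2 + D.B n ≤ K := by linarith [D.B_mono (Nat.le_succ n)]
    rw [Ex_succ]
    calc _ ≤ Ex D.strat σ2 s n (fun l =>
            Real.exp (lam * D.Y s l) * Real.exp (lam ^ 2 * K ^ 2)) :=
          Ex_mono _ _ _ _ _ _ fun l hl hp => D.cond_exp_le σ2 hs l hp hlam (by rwa [hl]) hlK
      _ ≤ Real.exp (n * (lam ^ 2 * K ^ 2)) * Real.exp (lam ^ 2 * K ^ 2) := by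
          rw [Ex_mul_const]
          exact mul_le_mul_of_nonneg_right (ih hK') (Real.exp_pos _).le
      _ = _ := by
          rw [← Real.exp_add]
          congr 1
          push_cast
          ring

/-- Deviation bound, from Markov's inequality for `exp (lam * Y)` with `lam = δ / (2 * √n)`. -/
lemma tail (σ2 : G.Strategy2) {s : G.S} (hs : s ∈ U) {δ : ℝ} (hδ : 0 < δ) (hδ1 : δ ≤ 1)
    {n : ℕ} (hB : (2 + D.B n) ^ 4 ≤ n) :
    mu D.strat σ2 s {ρ | δ * n ≤ D.Y s (List.ofFn (pfx n ρ))} ≤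
      ENNReal.ofReal (Real.exp (-(δ ^ 2 / 4) * √n)) := by
  set K := 2 + D.B n with hKd
  have hB0 : 0 ≤ D.B n := by
    have h1 := D.φ_ge n (Classical.choice G.nonemptyS)
    have h2 := D.φ_nonpos n (Classical.choice G.nonemptyS)
    linarith
  have hK2 : 2 ≤ K := by linarith
  have hKs : K ^ 2 ≤ √n := by
    refine Real.le_sqrt_of_sq_le ?_
    calc (K ^ 2) ^ 2 = K ^ 4 := by ring
      _ ≤ (n : ℝ) := hB
  have hs0 : 0 < √(n : ℝ) := lt_of_lt_of_le (by positivity) hKs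
  have hss : √(n : ℝ) * √n = n := Real.mul_self_sqrt (Nat.cast_nonneg n)
  set r := √(n : ℝ) with hr
  set lam := δ / (2 * r) with hlamd
  have hlam : 0 < lam := by positivity
  have hlamr : lam * r = δ / 2 := by rw [hlamd]; field_simp
  have hlK : lam * K ≤ 1 := by
    have : K ≤ r := by nlinarith
    nlinarith
  have hE := D.Ex_exp_le σ2 hs hlam.le hlK n le_rfl
  have hbound : n * (lam ^ 2 * K ^ 2) ≤ δ ^ 2 / 4 * r := by
    rw [← hss]
    calc r * r * (lam ^ 2 * K ^ 2) = (lam * r) ^ 2 * K ^ 2 := by ring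
      _ ≤ (lam * r) ^ 2 * r := by gcongr
      _ = δ ^ 2 / 4 * r := by rw [hlamr]; ring
  have hmeas : Measurable (fun ρ : G.Play => Real.exp (lam * D.Y s (List.ofFn (pfx n ρ)))) :=
    (measurable_of_finite (fun w : Fin n → G.Move => Real.exp (lam * D.Y s (List.ofFn w)))).comp
      (measurable_pfx n)
  have hInt : Integrable (fun ρ : G.Play => Real.exp (lam * D.Y s (List.ofFn (pfx n ρ))))
      (mu D.strat σ2 s) := by
    obtain ⟨C, hC⟩ := (Set.finite_range
      (fun w : Fin n → G.Move => Real.exp (lam * D.Y s (List.ofFn w)))).bddAbove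
    refine Integrable.of_bound hmeas.aestronglyMeasurable C (ae_of_all _ fun ρ => ?_)
    rw [Real.norm_of_nonneg (Real.exp_pos _).le]
    exact hC ⟨pfx n ρ, rfl⟩
  have hM := mul_meas_ge_le_integral_of_nonneg (μ := mu D.strat σ2 s)
    (ae_of_all _ fun ρ => (Real.exp_pos (lam * D.Y s (List.ofFn (pfx n ρ)))).le) hInt
    (Real.exp (lam * (δ * n)))
  rw [integral_pfx _ _ _ n (fun l => Real.exp (lam * D.Y s l))] at hM
  have hset : {ρ : G.Play | δ * n ≤ D.Y s (List.ofFn (pfx n ρ))} =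
      {ρ | Real.exp (lam * (δ * n)) ≤ Real.exp (lam * D.Y s (List.ofFn (pfx n ρ)))} := by
    ext ρ
    simp only [Set.mem_ofPred_eq, Real.exp_le_exp]
    exact (mul_le_mul_iff_right₀ hlam).symm
  rw [hset, ← ofReal_measureReal]
  refine ENNReal.ofReal_le_ofReal ?_
  have h1 := hM.trans (hE.trans (Real.exp_le_exp.2 hbound))
  rw [← le_div_iff₀' (Real.exp_pos _), ← Real.exp_sub] at h1
  refine h1.trans (le_of_eq ?_)
  congr 1
  calc δ ^ 2 / 4 * r - lam * (δ * n) = δ ^ 2 / 4 * r - (lam * r) * δ * r := by rw [← hss]; ring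
    _ = _ := by rw [hlamr]; ring

lemma summable_exp_sqrt {a : ℝ} (ha : 0 < a) : Summable (fun n : ℕ => Real.exp (-a * √n)) := by
  have h2 : Summable (fun n : ℕ => 24 / a ^ 4 * (1 / (n : ℝ) ^ 2)) :=
    (Real.summable_one_div_nat_pow.2 one_lt_two).mul_left _
  refine Summable.of_norm_bounded_eventually_nat h2 ?_
  filter_upwards [eventually_gt_atTop 0] with n hn
  have hn' : (0 : ℝ) < n := by exact_mod_cast hn
  rw [Real.norm_of_nonneg (Real.exp_pos _).le, neg_mul, Real.exp_neg]
  have h3 := Real.pow_div_factorial_le_exp (a * √n) (by positivity) 4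
  have h4 : (√(n : ℝ)) ^ 4 = (n : ℝ) ^ 2 := by
    calc (√(n : ℝ)) ^ 4 = ((√(n : ℝ)) ^ 2) ^ 2 := by ring
      _ = _ := by rw [Real.sq_sqrt hn'.le]
  rw [mul_pow, h4] at h3
  calc (Real.exp (a * √n))⁻¹ ≤ (a ^ 4 * (n : ℝ) ^ 2 / (Nat.factorial 4 : ℕ))⁻¹ :=
        inv_anti₀ (by positivity) h3
    _ = _ := by
        norm_num [Nat.factorial]
        field_simp

/-- The deviation bounds are summable in `n`, so the Borel–Cantelli lemma applies. -/
lemma ae_eventually_csum_le (σ2 : G.Strategy2) {s : G.S} (hs : s ∈ U) {δ : ℝ} (hδ : 0 < δ)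
    (hδ1 : δ ≤ 1) :
    ∀ᵐ ρ ∂(mu D.strat σ2 s), ∀ᶠ n : ℕ in atTop,
      csum (List.ofFn (pfx n ρ)) ≤ ∑ i ∈ Finset.range n, D.e i + D.B n + δ * n := by
  have hsum : ∑' n : ℕ, mu D.strat σ2 s
      {ρ | (2 + D.B n) ^ 4 ≤ n ∧ δ * n ≤ D.Y s (List.ofFn (pfx n ρ))} ≠ ⊤ := by
    refine ne_top_of_le_ne_top
      (summable_exp_sqrt (a := δ ^ 2 / 4) (by positivity)).tsum_ofReal_ne_top
      (ENNReal.tsum_le_tsum fun n => ?_)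
    by_cases hn : (2 + D.B n) ^ 4 ≤ n
    · simpa [hn] using D.tail σ2 hs hδ hδ1 hn
    · simp [hn]
  filter_upwards [ae_eventually_notMem hsum] with ρ hρ
  filter_upwards [hρ, D.B_growth] with n hn hB
  simp only [hB, true_and, not_le, Y, List.length_ofFn] at hn
  have := D.le_avg_φ (nxt s (List.ofFn (pfx n ρ))) n
  linarith

/-- The drift allowances and the potentials are negligible in the long run, so the strategy of a
schedule attains long-run average reward one. -/
lemma ae_mem_evLimInfAvgGe_one (σ2 : G.Strategy2) {s : G.S} (hs : s ∈ U) :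
    ∀ᵐ ρ ∂(mu D.strat σ2 s), ρ ∈ G.evLimInfAvgGe 1 := by
  have hall : ∀ᵐ ρ ∂(mu D.strat σ2 s), ∀ k : ℕ, ∀ᶠ n : ℕ in atTop,
      csum (List.ofFn (pfx n ρ)) ≤
        ∑ i ∈ Finset.range n, D.e i + D.B n + (1 / ((k : ℝ) + 1)) * n := by
    rw [ae_all_iff]
    intro k
    refine D.ae_eventually_csum_le σ2 hs (by positivity) ?_
    rw [div_le_one (by positivity)]
    linarith [(Nat.cast_nonneg k : (0 : ℝ) ≤ k)]
  filter_upwards [hall] with ρ hρ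
  show 1 ≤ liminf (G.avg ρ) atTop
  refine le_of_forall_lt fun c hc => ?_
  obtain ⟨k, hk⟩ := exists_nat_one_div_lt (show 0 < (1 - c) / 8 by linarith)
  have hces := D.e_tendsto.cesaro
  have hevE := hces.eventually (gt_mem_nhds (show 0 < (1 - c) / 8 by linarith))
  have hevB : ∀ᶠ n : ℕ in atTop, D.B n ≤ (1 - c) / 8 * n := by
    have h1 : ∀ᶠ n : ℕ in atTop, (8 / (1 - c)) ^ 2 ≤ (n : ℝ) :=
      tendsto_natCast_atTop_atTop.eventually (eventually_ge_atTop _)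
    filter_upwards [h1, D.B_growth] with n hn hB
    have hB0 : 0 ≤ D.B n := by
      have h1 := D.φ_ge n s
      have h2 := D.φ_nonpos n s
      linarith
    -- `B n ≤ √n` by the growth bound, and `√n ≤ (1 - c) / 8 * n` for large `n`.
    have h2 : D.B n ≤ √n := by
      refine Real.le_sqrt_of_sq_le (le_trans ?_ hB)
      nlinarith [sq_nonneg (D.B n), mul_nonneg hB0 hB0, pow_nonneg hB0 3, pow_nonneg hB0 4]
    have h3 : 8 / (1 - c) ≤ √n := Real.le_sqrt_of_sq_le hn
    have h4 : 1 ≤ (1 - c) / 8 * √n := by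
      rw [div_le_iff₀ (by linarith)] at h3
      linarith
    calc D.B n ≤ √n * 1 := by linarith
      _ ≤ √n * ((1 - c) / 8 * √n) := by gcongr
      _ = (1 - c) / 8 * (√n * √n) := by ring
      _ = _ := by rw [Real.mul_self_sqrt (Nat.cast_nonneg n)]
  have hev : ∀ᶠ n in atTop, 1 - (1 - c) / 2 ≤ G.avg ρ n := by
    filter_upwards [hρ k, hevE, hevB, eventually_gt_atTop 0] with n h1 h2 h3 hn
    have hn' : (0 : ℝ) < n := by exact_mod_cast hn
    rw [avg_eq ρ hn]
    have h4 : ∑ i ∈ Finset.range n, D.e i ≤ (1 - c) / 8 * n := by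
      rw [inv_mul_lt_iff₀ hn'] at h2
      linarith
    have h5 : 1 / ((k : ℝ) + 1) * n ≤ (1 - c) / 8 * n := by gcongr
    have h6 : csum (List.ofFn (pfx n ρ)) / n ≤ (1 - c) / 2 := by
      rw [div_le_iff₀ hn']
      nlinarith
    linarith
  have := le_liminf_of_le (isCoboundedUnder_avg ρ) hev
  linarith

end Schedule

end CGS

/-! ### Assembling the schedule -/

namespace CGS

open MeasureTheory

variable {G : CGS}

/-- The `k`-th stationary strategy, optimal up to `1 / (k + 1)`, is in use from a time onwards at
which all potentials met so far are small compared with the elapsed time. Subtracting constants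
from the potentials makes them nonpositive and decreasing. -/
lemma exists_schedule (U : Set G.S)
    (h : ∀ ε : ℝ, 0 < ε → ∃ σ1 : G.Strategy1, σ1.Stationary ∧
      ∀ σ2 : G.Strategy2, ∀ s ∈ U,
        CGS.pr σ1 σ2 s (G.evLimInfAvgGe (1 - ε) ∩ G.safe U) = 1) :
    Nonempty (Schedule G U) := by
  have hpos : ∀ k : ℕ, 0 < 1 / ((k : ℝ) + 1) := fun k => by positivity
  choose σ hst hσ using fun k : ℕ => h (1 / ((k : ℝ) + 1)) (hpos k)
  have hae : ∀ (k : ℕ) (σ2 : G.Strategy2), ∀ s ∈ U, ∀ᵐ ρ ∂(mu (σ k) σ2 s),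
      ρ ∈ G.evLimInfAvgGe (1 - 1 / ((k : ℝ) + 1)) ∩ G.safe U := fun k σ2 s hs =>
    ae_mem_of_pr_eq_one _ _ _ ((measurableSet_evLimInfAvgGe _).inter (measurableSet_safe U))
      (hσ k σ2 s hs)
  choose ψ hψ using fun k : ℕ => exists_potential U (σ k) (hst k) (hpos k)
    (fun σ2 s hs => (hae k σ2 s hs).mono fun ρ hρ => hρ.1)
  -- `H k` bounds the `k`-th potential, and `R k` is twice the sum of the earlier bounds.
  let H : ℕ → ℝ := fun k => ∑ s, |ψ k s|
  have hH0 : ∀ k, 0 ≤ H k := fun k => Finset.sum_nonneg fun s _ => abs_nonneg _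
  have hH : ∀ k s, |ψ k s| ≤ H k := fun k s =>
    Finset.single_le_sum (f := fun s => |ψ k s|) (fun s _ => abs_nonneg _) (Finset.mem_univ s)
  let R : ℕ → ℝ := fun k => ∑ j ∈ Finset.range k, 2 * H j
  have hRs : ∀ k, R (k + 1) = R k + 2 * H k := fun k => Finset.sum_range_succ _ _
  have hRm : Monotone R := monotone_nat_of_le_succ fun k => by
    rw [hRs]; linarith [hH0 k]
  have hR0 : ∀ k, 0 ≤ R k := fun k => Finset.sum_nonneg fun j _ => by linarith [hH0 j]
  -- The shifted potential `χ k` takes values in `[-R (k + 1), -R k]`.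
  let χ : ℕ → G.S → ℝ := fun k s => ψ k s - H k - R k
  have hχle : ∀ k s, χ k s ≤ -R k := fun k s => by
    have := (abs_le.1 (hH k s)).2
    simp only [χ]; linarith
  have hχge : ∀ k s, -R (k + 1) ≤ χ k s := fun k s => by
    have := (abs_le.1 (hH k s)).1
    simp only [χ]; rw [hRs]; linarith
  have hχm : ∀ s, Antitone (fun k => χ k s) := fun s => antitone_nat_of_succ_le fun k =>
    (hχle (k + 1) s).trans (hχge k s)
  let κ : ℕ → ℕ := fun n => Nat.findGreatest (fun k => (2 + R (k + 1)) ^ 4 ≤ (n : ℝ)) n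
  have hκm : Monotone κ := fun m n hmn => Nat.findGreatest_mono
    (fun k hk => hk.trans (by exact_mod_cast hmn)) hmn
  have hlarge : ∀ k, ∀ᶠ n : ℕ in atTop, (2 + R (k + 1)) ^ 4 ≤ (n : ℝ) := fun k =>
    tendsto_natCast_atTop_atTop.eventually (eventually_ge_atTop _)
  have hκt : Tendsto κ atTop atTop := by
    rw [tendsto_atTop]
    intro k
    filter_upwards [hlarge k, eventually_ge_atTop k] with n hn hkn
    exact Nat.le_findGreatest hkn hn
  refine ⟨{
    q := fun n s => (σ (κ n)).play [] s
    φ := fun n => χ (κ n)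
    e := fun n => 2 * (1 / ((κ n : ℝ) + 1))
    B := fun n => R (κ n + 1)
    q_mem := fun n s a ha => (σ (κ n)).play_mem [] s a ha
    drift := ?_
    closed := ?_
    φ_anti := fun n s => hχm s (hκm (Nat.le_succ n))
    φ_nonpos := fun n s => (hχle _ s).trans (by linarith [hR0 (κ n)])
    φ_ge := fun n s => hχge _ s
    B_mono := fun m n hmn => hRm (Nat.succ_le_succ (hκm hmn))
    e_nonneg := fun n => by positivity
    e_le := ?_
    B_growth := ?_
    e_tendsto := ?_ }⟩
  · intro n s hs b hb
    have h1 := hψ (κ n) s hs b hb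
    have h2 : ∀ a, cost (s, a, b) + ∑ t, (G.trans s a b t).toReal * χ (κ n) t =
        (cost (s, a, b) + ∑ t, (G.trans s a b t).toReal * ψ (κ n) t) - (H (κ n) + R (κ n)) := by
      intro a
      have h3 : ∑ t, (G.trans s a b t).toReal * χ (κ n) t =
          ∑ t, (G.trans s a b t).toReal * ψ (κ n) t -
            (∑ t, (G.trans s a b t).toReal) * (H (κ n) + R (κ n)) := by
        rw [Finset.sum_mul, ← Finset.sum_sub_distrib]
        exact Finset.sum_congr rfl fun t _ => by simp only [χ]; ring
      rw [h3, pmf_sum_toReal]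
      ring
    simp only [h2]
    have h4 : ∑ a, ((σ (κ n)).play [] s a).toReal *
        ((cost (s, a, b) + ∑ t, (G.trans s a b t).toReal * ψ (κ n) t) - (H (κ n) + R (κ n))) =
        ∑ a, ((σ (κ n)).play [] s a).toReal *
          (cost (s, a, b) + ∑ t, (G.trans s a b t).toReal * ψ (κ n) t) -
        (∑ a, ((σ (κ n)).play [] s a).toReal) * (H (κ n) + R (κ n)) := by
      rw [Finset.sum_mul, ← Finset.sum_sub_distrib]
      exact Finset.sum_congr rfl fun t _ => by ring
    rw [h4, pmf_sum_toReal]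
    simp only [χ]
    linarith
  · intro n s hs a ha b hb t ht
    exact closed_of_safe U (σ (κ n)) (hst _)
      (fun σ2 s hs => (hae (κ n) σ2 s hs).mono fun ρ hρ => hρ.2) hs ha hb ht
  · intro n
    have : 1 / ((κ n : ℝ) + 1) ≤ 1 := by
      rw [div_le_one (by positivity)]
      linarith [(Nat.cast_nonneg (κ n) : (0 : ℝ) ≤ κ n)]
    linarith
  · filter_upwards [hlarge 0] with n hn
    exact Nat.findGreatest_spec (P := fun k => (2 + R (k + 1)) ^ 4 ≤ (n : ℝ)) (Nat.zero_le n) hn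
  · have := (tendsto_one_div_add_atTop_nhds_zero_nat (𝕜 := ℝ)).comp hκt
    simpa using this.const_mul 2

end CGS

/-- Lemma 2 of the paper. If for every `ε > 0` there is a stationary
strategy ensuring `LimInfAvg(1-ε) ∩ Safe(U)` almost surely from every state of `U`,
then there is a Markov strategy ensuring `LimInfAvg(1)` almost surely from every
state of `U`. -/
theorem stmt1 (G : CGS) (U : Set G.S)
    (h : ∀ ε : ℝ, 0 < ε → ∃ σ1 : G.Strategy1, σ1.Stationary ∧
      ∀ σ2 : G.Strategy2, ∀ s ∈ U,
        CGS.pr σ1 σ2 s (G.evLimInfAvgGe (1 - ε) ∩ G.safe U) = 1) :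
    ∃ σ1 : G.Strategy1, σ1.Markov ∧
      ∀ σ2 : G.Strategy2, ∀ s ∈ U,
        CGS.pr σ1 σ2 s (G.evLimInfAvgGe 1) = 1 := by
  obtain ⟨D⟩ := CGS.exists_schedule U h
  refine ⟨D.strat, D.strat_markov, fun σ2 s hs => ?_⟩
  rw [← CGS.mu_apply _ _ _ (CGS.measurableSet_evLimInfAvgGe 1)]
  exact (MeasureTheory.prob_compl_eq_zero_iff (CGS.measurableSet_evLimInfAvgGe 1)).1
    (D.ae_mem_evLimInfAvgGe_one σ2 hs)
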